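/- arXiv:2007.11054 — 2 statements merged into one kernel-verified Lean document; each statement's English description precedes it below -/
import Mathlib

section
/- For all m, m' ∈ ℕ^n one has the Minkowski sum identity S_D(m + m') = S_D(m) + S_D(m'): every element of S_D(m + m') can be written as x + y with x ∈ S_D(m) and y ∈ S_D(m'), and conversely every such sum x + y lies in S_D(m + m'). (This is the type-D case of the paper's Lemma that S_w(λ) + S_w(μ) = S_w(λ + μ).) -/
open Finset
open scoped Pointwise

/-- The quantity `Q_d(m) = (m_1 + ⋯ + m_{d-1}) + 2(m_d + ⋯ + m_{n-2}) + m_{n-1} + m_n`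
appearing in the type-`D` inequalities. -/
def QD (n : ℕ) (m : ℕ → ℕ) (d : ℕ) : ℕ :=
  (∑ l ∈ Icc 1 (d - 1), m l) + 2 * (∑ l ∈ Icc d (n - 2), m l) + m (n - 1) + m n

/-- The lattice-point set `S_D(m)` of the polytope `P_w(λ)` in type `D_n`, where
`w = s_1 ⋯ s_{n-1} s_n s_{n-2} ⋯ s_1` and `λ = m_1 ω_1 + ⋯ + m_n ω_n`.
A point is a triple `(a, b, d)` where `a` is the 1-based tuple `a_1, …, a_{n-1}`,
`b ∈ ℕ` and `d` is the 1-based tuple `d_2, …, d_{n-1}` (all other coordinates vanish),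
subject to the Dyck-path inequalities (D1)–(D4), the degree-path inequalities (D5)–(D6)
and the inequalities (D7) from paths with coefficients. -/
def SD (n : ℕ) (m : ℕ → ℕ) : Set ((ℕ → ℕ) × ℕ × (ℕ → ℕ)) :=
  {x | (∀ l, (l = 0 ∨ n - 1 < l) → x.1 l = 0) ∧
    (∀ l, (l ≤ 1 ∨ n - 1 < l) → x.2.2 l = 0) ∧
    (∀ j, 1 ≤ j → j ≤ n - 1 →
      ∑ l ∈ Icc 1 j, x.1 l ≤ ∑ l ∈ Icc 1 j, m l) ∧
    ((∑ l ∈ Icc 1 (n - 2), x.1 l) + x.2.1 ≤ (∑ l ∈ Icc 1 (n - 2), m l) + m n) ∧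
    ((∑ l ∈ Icc 1 (n - 1), x.1 l) + x.2.2 (n - 1) ≤ ∑ l ∈ Icc 1 n, m l) ∧
    ((∑ l ∈ Icc 1 (n - 2), x.1 l) + x.2.1 + x.2.2 (n - 1) ≤ ∑ l ∈ Icc 1 n, m l) ∧
    (∀ d, 2 ≤ d → d ≤ n - 2 →
      (∑ l ∈ Icc 1 (n - 1), x.1 l) + ∑ l ∈ Icc d (n - 1), x.2.2 l ≤ QD n m d) ∧
    (∀ d, 2 ≤ d → d ≤ n - 2 →
      (∑ l ∈ Icc 1 (n - 2), x.1 l) + x.2.1 + ∑ l ∈ Icc d (n - 1), x.2.2 l ≤ QD n m d) ∧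
    (∀ d k, 2 ≤ d → d ≤ n - 1 → d - 1 ≤ k → k ≤ n - 2 →
      2 * (∑ l ∈ Icc 1 k, x.1 l) + (∑ l ∈ Icc (k + 1) (n - 1), x.1 l) + x.2.1 +
          ∑ l ∈ Icc d (n - 1), x.2.2 l ≤
        QD n m d + ∑ l ∈ Icc 1 k, m l)}

/-!
Put `N = n - 2`, `A_k = a_1 + ⋯ + a_k`, `M_k = m_1 + ⋯ + m_k`, `T_e = d_{e+1} + ⋯ + d_{n-1}`.
Since `Q_{e+1} = 2 M_N + m_{n-1} + m_n - M_e`, all the inequalities become bounds on the `A_k`,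
`a_{n-1}`, `b` and the `T_e`. A fundamental weight `ω_i` with `i ≤ n - 2` can be spent entirely on
one unit of `a_{n-1}` together with one unit of `b`. Choosing for each `i` how many copies
`c_i ≤ m_i` to spend in this way identifies `S_D(m)` with a union over `c` of shifted solution sets
for `m - c` of a simpler system, in which (D5)–(D7) are replaced by the single family
`A_N + a_{n-1} + b + T_e + M_e ≤ 2 M_N + m_{n-1} + m_n`. The largest useful choice is
`c_1 + ⋯ + c_e = min (a_{n-1}, b, min_{e ≤ k ≤ N} (M_k - A_k))`, and (D5)–(D7) say exactly that the
simpler system holds after it. Then moreover nothing is left of `a_{n-1}` or of `b`, or `A_N` is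
the full partial sum of `m - c`, and in that case the simpler system splits along any decomposition
of `m - c`: first `a` greedily, then `a_{n-1}` and `b`, and finally `d`, again greedily.
-/

/-- The partial sum `f_1 + ⋯ + f_k` of a 1-based sequence; the value `f 0` is ignored. -/
def prefixSum (f : ℕ → ℕ) (k : ℕ) : ℕ := ∑ l ∈ Icc 1 k, f l

/-- The tail `f_{e+1} + ⋯ + f_L` of the sum of a sequence of length `L`. The shift makes the tail
complementary to `prefixSum f e`; the sum `d_d + ⋯ + d_{n-1}` of (D5)–(D7) is
`tailSum (n - 1) d (d - 1)`. -/
def tailSum (L : ℕ) (f : ℕ → ℕ) (e : ℕ) : ℕ := ∑ l ∈ Icc (e + 1) L, f l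

theorem prefixSum_zero (f : ℕ → ℕ) : prefixSum f 0 = 0 := by simp [prefixSum]

theorem prefixSum_succ (f : ℕ → ℕ) (k : ℕ) :
    prefixSum f (k + 1) = prefixSum f k + f (k + 1) :=
  sum_Icc_succ_top (by omega) f

theorem prefixSum_add (f g : ℕ → ℕ) (k : ℕ) :
    prefixSum (f + g) k = prefixSum f k + prefixSum g k :=
  sum_add_distrib

theorem prefixSum_mono (f : ℕ → ℕ) : Monotone (prefixSum f) :=
  monotone_nat_of_le_succ fun k => by rw [prefixSum_succ]; omega

theorem prefixSum_update_of_lt (f : ℕ → ℕ) (x : ℕ) {j k : ℕ} (hkj : k < j) :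
    prefixSum (Function.update f j x) k = prefixSum f k :=
  sum_update_of_notMem (by simp [hkj]) f x

theorem tailSum_self (L : ℕ) (f : ℕ → ℕ) : tailSum L f L = 0 := by simp [tailSum]

theorem tailSum_eq_add {L e : ℕ} (f : ℕ → ℕ) (he : e < L) :
    tailSum L f e = f (e + 1) + tailSum L f (e + 1) := by
  rw [tailSum, tailSum, Icc_add_one_left_eq_Ioc (e + 1), add_sum_Ioc_eq_sum_Icc he]

theorem tailSum_add (L : ℕ) (f g : ℕ → ℕ) (e : ℕ) :
    tailSum L (f + g) e = tailSum L f e + tailSum L g e :=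
  sum_add_distrib

theorem prefixSum_add_tailSum {L k : ℕ} (f : ℕ → ℕ) (hk : k ≤ L) :
    prefixSum f k + tailSum L f k = prefixSum f L := by
  induction k with
  | zero => simp [prefixSum, tailSum]
  | succ k ih => rw [← ih (by omega), prefixSum_succ, tailSum_eq_add f hk, add_assoc]

theorem prefixSum_reflect (f : ℕ → ℕ) {L k : ℕ} (hk : k ≤ L) :
    prefixSum (fun j => f (L + 1 - j)) k = tailSum L f (L - k) := by
  induction k with
  | zero => rw [prefixSum_zero, Nat.sub_zero, tailSum_self]
  | succ k ih =>
    rw [prefixSum_succ, ih (by omega), tailSum_eq_add f (show L - (k + 1) < L by omega),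
      show L - (k + 1) + 1 = L - k by omega, show L + 1 - (k + 1) = L - k by omega, add_comm]

theorem exists_le_prefixSum_eq {F m : ℕ → ℕ} (hzero : F 0 = 0) (hmono : Monotone F)
    (hstep : ∀ k, F (k + 1) ≤ F k + m (k + 1)) : ∃ c ≤ m, prefixSum c = F := by
  refine ⟨fun k => F k - F (k - 1), fun k => ?_, funext fun k => ?_⟩
  · cases k with
    | zero => simp
    | succ k => simpa [add_comm] using hstep k
  · induction k with
    | zero => rw [prefixSum_zero, hzero]
    | succ k ih => rw [prefixSum_succ, ih]; exact Nat.add_sub_of_le (hmono k.le_succ)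

theorem exists_add_eq_of_le_add {c x y : ℕ} (h : c ≤ x + y) :
    ∃ c₀ c₁, c₀ ≤ x ∧ c₁ ≤ y ∧ c₀ + c₁ = c :=
  ⟨min c x, c - x, by omega, by omega, by omega⟩

theorem exists_add_add_of_add_eq_add {ι : Type*} {m m' w c : ι → ℕ} (h : m + m' = w + c) :
    ∃ w₀ w₁ c₀ c₁, m = w₀ + c₀ ∧ m' = w₁ + c₁ ∧ w = w₀ + w₁ ∧ c = c₀ + c₁ := by
  have hle (i : ι) : c i ≤ m i + m' i := by
    have := congrFun h i
    simp only [Pi.add_apply] at this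
    omega
  choose c₀ c₁ hc₀ hc₁ hc using fun i => exists_add_eq_of_le_add (hle i)
  refine ⟨m - c₀, m' - c₁, c₀, c₁, (tsub_add_cancel_of_le hc₀).symm,
    (tsub_add_cancel_of_le hc₁).symm, funext fun i => ?_, funext fun i => (hc i).symm⟩
  have := congrFun h i
  have := hc i
  have := hc₀ i
  have := hc₁ i
  simp only [Pi.add_apply, Pi.sub_apply] at *
  omega

theorem exists_add_of_prefixSum_le_add {N : ℕ} {t B B' : ℕ → ℕ} (hB : Monotone B)
    (hB' : Monotone B') (h : ∀ k ≤ N, prefixSum t k ≤ B k + B' k) :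
    ∃ t₀ t₁, t = t₀ + t₁ ∧ (∀ k ≤ N, prefixSum t₀ k ≤ B k) ∧
      ∀ k ≤ N, prefixSum t₁ k ≤ B' k := by
  -- The partial sums of `t₁` are the running maximum of what `B` fails to cover.
  let F (k : ℕ) : ℕ := (range (k + 1)).sup fun i => prefixSum t i - B i
  have hF_succ (k : ℕ) : F (k + 1) = F k ⊔ (prefixSum t (k + 1) - B (k + 1)) := by
    simp only [F, range_add_one (n := k + 1), sup_insert, sup_comm]
  have le_F (k : ℕ) : prefixSum t k - B k ≤ F k :=
    le_sup (f := fun i => prefixSum t i - B i) (self_mem_range_succ k)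
  have hF_step (k : ℕ) : F (k + 1) ≤ F k + t (k + 1) := by
    rw [hF_succ, prefixSum_succ]
    have := le_F k
    have := hB (Nat.le_add_right k 1)
    exact sup_le (by omega) (by omega)
  obtain ⟨t₁, ht₁, hsum⟩ := exists_le_prefixSum_eq (F := F) (by simp [F, prefixSum_zero])
    (monotone_nat_of_le_succ fun k => by rw [hF_succ]; exact le_sup_left) hF_step
  refine ⟨t - t₁, t₁, (tsub_add_cancel_of_le ht₁).symm, fun k _ => ?_, fun k hk => ?_⟩
  · have := prefixSum_add (t - t₁) t₁ k
    rw [tsub_add_cancel_of_le ht₁, hsum] at this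
    have := le_F k
    omega
  · rw [hsum]
    refine Finset.sup_le fun i hi => ?_
    have hik : i ≤ k := by simpa [Nat.lt_succ_iff] using hi
    have := h i (hik.trans hk)
    have := hB' hik
    omega

theorem exists_add_of_tailSum_le_add {s L : ℕ} {t B B' : ℕ → ℕ} (hB : Antitone B)
    (hB' : Antitone B') (h : ∀ e, s ≤ e → e ≤ L → tailSum L t e ≤ B e + B' e) :
    ∃ t₀ t₁, t = t₀ + t₁ ∧ (∀ e, s ≤ e → e ≤ L → tailSum L t₀ e ≤ B e) ∧
      ∀ e, s ≤ e → e ≤ L → tailSum L t₁ e ≤ B' e := by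
  obtain ⟨r₀, r₁, hr, h₀, h₁⟩ := exists_add_of_prefixSum_le_add (N := L - s)
    (t := fun j => t (L + 1 - j)) (B := fun j => B (L - j)) (B' := fun j => B' (L - j))
    (fun i j hij => hB (by omega)) (fun i j hij => hB' (by omega)) fun k hk => by
      obtain rfl | hs : k = 0 ∨ s ≤ L - k := by omega
      · simp [prefixSum_zero]
      · rw [prefixSum_reflect t (by omega)]
        exact h _ hs (by omega)
  -- Reflecting back, `min` discards the entries of `r₁` outside the range `1, …, L`.
  let t₁ (l : ℕ) : ℕ := min (t l) (r₁ (L + 1 - l))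
  have ht₁ : t₁ ≤ t := fun l => min_le_left _ _
  have t₁_reflect (j : ℕ) (hj : j ≤ L) : t₁ (L + 1 - j) = r₁ j := by
    have := congrFun hr j
    simp only [t₁, Pi.add_apply] at *
    rw [show L + 1 - (L + 1 - j) = j by omega]
    omega
  have tailSum_t₁ (e : ℕ) (he : e ≤ L) : tailSum L t₁ e = prefixSum r₁ (L - e) := by
    rw [← Nat.sub_sub_self he, ← prefixSum_reflect t₁ (Nat.sub_le L e), Nat.sub_sub_self he]
    exact sum_congr rfl fun j hj => t₁_reflect j (by have := mem_Icc.1 hj; omega)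
  have tailSum_t (e : ℕ) (he : e ≤ L) :
      tailSum L t e = prefixSum r₀ (L - e) + prefixSum r₁ (L - e) := by
    rw [← prefixSum_add, ← hr, prefixSum_reflect t (Nat.sub_le L e), Nat.sub_sub_self he]
  refine ⟨t - t₁, t₁, (tsub_add_cancel_of_le ht₁).symm, fun e hse heL => ?_,
    fun e hse heL => ?_⟩
  · have hsplit := tailSum_add L (t - t₁) t₁ e
    rw [tsub_add_cancel_of_le ht₁, tailSum_t e heL, tailSum_t₁ e heL] at hsplit
    rw [← Nat.add_right_cancel hsplit]
    simpa [Nat.sub_sub_self heL] using h₀ (L - e) (by omega)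
  · rw [tailSum_t₁ e heL]
    simpa [Nat.sub_sub_self heL] using h₁ (L - e) (by omega)

/-- The inequalities (D1)–(D7) for `n = N + 2` in terms of partial sums: `u = m_{n-1}`, `v = m_n`,
`p = a_{n-1}`, `q = b`, and only `m_1, …, m_N` and `a_1, …, a_N` are read off the sequences `m`
and `a`. The index `e` is `d - 1`, and (D3), (D4) are the cases `e = N` of the families coming from
(D5), (D6). -/
structure PathIneqs (N : ℕ) (m : ℕ → ℕ) (u v : ℕ) (a : ℕ → ℕ) (p q : ℕ) (d : ℕ → ℕ) :
    Prop where
  prefix_le : ∀ k ≤ N, prefixSum a k ≤ prefixSum m k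
  left_le : prefixSum a N + p ≤ prefixSum m N + u
  right_le : prefixSum a N + q ≤ prefixSum m N + v
  left_tail_le : ∀ e, 1 ≤ e → e ≤ N →
    prefixSum a N + p + tailSum (N + 1) d e + prefixSum m e ≤ 2 * prefixSum m N + u + v
  right_tail_le : ∀ e, 1 ≤ e → e ≤ N →
    prefixSum a N + q + tailSum (N + 1) d e + prefixSum m e ≤ 2 * prefixSum m N + u + v
  both_tail_le : ∀ e k, 1 ≤ e → e ≤ k → k ≤ N →
    prefixSum a k + prefixSum a N + p + q + tailSum (N + 1) d e + prefixSum m e ≤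
      2 * prefixSum m N + u + v + prefixSum m k

/-- The simpler system describing the points of `S_D(m)` in which no copy of `ω_1, …, ω_{n-2}` is
spent on a unit of `p = a_{n-1}` together with a unit of `q = b`. The arguments are those of
`PathIneqs`. -/
structure UnpairedIneqs (N : ℕ) (m : ℕ → ℕ) (u v : ℕ) (a : ℕ → ℕ) (p q : ℕ) (d : ℕ → ℕ) :
    Prop where
  prefix_le : ∀ k ≤ N, prefixSum a k ≤ prefixSum m k
  left_le : prefixSum a N + p ≤ prefixSum m N + u
  right_le : prefixSum a N + q ≤ prefixSum m N + v
  tail_le : ∀ e, 1 ≤ e → e ≤ N →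
    prefixSum a N + p + q + tailSum (N + 1) d e + prefixSum m e ≤ 2 * prefixSum m N + u + v

section PathIneqs

variable {N u u' v v' p p' q q' : ℕ} {m m' a a' d d' : ℕ → ℕ}

theorem PathIneqs.add (h : PathIneqs N m u v a p q d) (h' : PathIneqs N m' u' v' a' p' q' d') :
    PathIneqs N (m + m') (u + u') (v + v') (a + a') (p + p') (q + q') (d + d') where
  prefix_le k hk := by
    have := h.prefix_le k hk
    have := h'.prefix_le k hk
    simp only [prefixSum_add]
    omega
  left_le := by
    have := h.left_le
    have := h'.left_le
    simp only [prefixSum_add]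
    omega
  right_le := by
    have := h.right_le
    have := h'.right_le
    simp only [prefixSum_add]
    omega
  left_tail_le e he heN := by
    have := h.left_tail_le e he heN
    have := h'.left_tail_le e he heN
    simp only [prefixSum_add, tailSum_add]
    omega
  right_tail_le e he heN := by
    have := h.right_tail_le e he heN
    have := h'.right_tail_le e he heN
    simp only [prefixSum_add, tailSum_add]
    omega
  both_tail_le e k he hek hkN := by
    have := h.both_tail_le e k he hek hkN
    have := h'.both_tail_le e k he hek hkN
    simp only [prefixSum_add, tailSum_add]
    omega

theorem PathIneqs.congr_prefixSum (h : PathIneqs N m u v a p q d)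
    (ha : ∀ k ≤ N, prefixSum a' k = prefixSum a k) : PathIneqs N m u v a' p q d where
  prefix_le k hk := (ha k hk).trans_le (h.prefix_le k hk)
  left_le := by rw [ha N le_rfl]; exact h.left_le
  right_le := by rw [ha N le_rfl]; exact h.right_le
  left_tail_le := by rw [ha N le_rfl]; exact h.left_tail_le
  right_tail_le := by rw [ha N le_rfl]; exact h.right_tail_le
  both_tail_le e k he hek hkN := by
    rw [ha N le_rfl, ha k hkN]
    exact h.both_tail_le e k he hek hkN

/-- Each copy of `ω_i` counted by `c` pays for one unit of `p` together with one unit of `q`. -/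
theorem UnpairedIneqs.pathIneqs_add {w c : ℕ → ℕ} (h : UnpairedIneqs N w u v a p q d) :
    PathIneqs N (w + c) u v a (p + prefixSum c N) (q + prefixSum c N) d := by
  have hc {e k : ℕ} (hek : e ≤ k) : prefixSum c e ≤ prefixSum c k := prefixSum_mono c hek
  constructor <;> simp only [prefixSum_add]
  · exact fun k hk => (h.prefix_le k hk).trans (Nat.le_add_right _ _)
  · have := h.left_le
    omega
  · have := h.right_le
    omega
  · intro e he heN
    have := h.tail_le e he heN
    have := hc heN
    omega
  · intro e he heN
    have := h.tail_le e he heN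
    have := hc heN
    omega
  · intro e k he hek hkN
    have := h.tail_le e he (hek.trans hkN)
    have := h.prefix_le k hkN
    have := hc hek
    omega

/-- The partial sums of `c` are the largest monotone sequence bounded by `r` and by all the slacks
`M_k - A_k`. -/
theorem exists_le_prefixSum_eq_fold_min {r : ℕ} (h : ∀ k ≤ N, prefixSum a k ≤ prefixSum m k)
    (hr : r ≤ prefixSum m N - prefixSum a N) :
    ∃ c ≤ m, ∀ e, prefixSum c e =
      (Icc e N).fold min r fun k => prefixSum m k - prefixSum a k := by
  let F (e : ℕ) : ℕ := (Icc e N).fold min r fun k => prefixSum m k - prefixSum a k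
  have hF (e : ℕ) : F e ≤ r ∧ ∀ k ∈ Icc e N, F e ≤ prefixSum m k - prefixSum a k :=
    (le_fold_min _).1 le_rfl
  have hF_zero : F 0 = 0 :=
    Nat.le_zero.1 <| (fold_min_le _).2 <| .inr ⟨0, by simp, by simp [prefixSum_zero]⟩
  have hF_mono : Monotone F := fun e e' hee' =>
    (le_fold_min _).2 ⟨(hF e).1, fun k hk => (hF e).2 k (Icc_subset_Icc_left hee' hk)⟩
  have hF_step (e : ℕ) : F (e + 1) ≤ F e + m (e + 1) := by
    obtain ⟨hFr, hFs⟩ := hF (e + 1)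
    rw [← Nat.sub_le_iff_le_add]
    refine (le_fold_min _).2 ⟨by omega, fun k hk => ?_⟩
    obtain ⟨hek, hkN⟩ := mem_Icc.1 hk
    rcases hek.eq_or_lt with rfl | hek
    · rcases hkN.eq_or_lt with rfl | hkN
      · omega
      · have := hFs (e + 1) (mem_Icc.2 ⟨le_rfl, hkN⟩)
        have := h e hkN.le
        have := prefixSum_succ m e
        have := prefixSum_succ a e
        omega
    · have := hFs k (mem_Icc.2 ⟨hek, hkN⟩)
      omega
  obtain ⟨c, hcm, hc⟩ := exists_le_prefixSum_eq hF_zero hF_mono hF_step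
  exact ⟨c, hcm, congrFun hc⟩

theorem PathIneqs.exists_unpairedIneqs (h : PathIneqs N m u v a p q d) :
    ∃ w c p' q', m = w + c ∧ p = p' + prefixSum c N ∧ q = q' + prefixSum c N ∧
      UnpairedIneqs N w u v a p' q' d ∧ (p' = 0 ∨ q' = 0 ∨ prefixSum a N = prefixSum w N) := by
  obtain ⟨r, hr⟩ : ∃ r, r = min (min p q) (prefixSum m N - prefixSum a N) := ⟨_, rfl⟩
  obtain ⟨c, hcm, hc⟩ :=
    exists_le_prefixSum_eq_fold_min h.prefix_le (hr.trans_le (min_le_right _ _))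
  have c_le (e : ℕ) : prefixSum c e ≤ r ∧
      ∀ k ∈ Icc e N, prefixSum c e ≤ prefixSum m k - prefixSum a k :=
    (le_fold_min _).1 (hc e).le
  have c_tight (e : ℕ) : r ≤ prefixSum c e ∨
      ∃ k ∈ Icc e N, prefixSum m k - prefixSum a k ≤ prefixSum c e :=
    (fold_min_le _).1 (hc e).ge
  have c_N : prefixSum c N = r := by
    have := (c_le N).1
    rcases c_tight N with hN | ⟨k, hk, hkN⟩
    · omega
    · rw [Icc_self, mem_singleton] at hk
      subst hk
      omega
  have hmc : m = m - c + c := (tsub_add_cancel_of_le hcm).symm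
  have prefixSum_m (k : ℕ) : prefixSum m k = prefixSum (m - c) k + prefixSum c k := by
    rw [← prefixSum_add, ← hmc]
  have m_N := prefixSum_m N
  have a_N := h.prefix_le N le_rfl
  have hp := h.left_le
  have hq := h.right_le
  refine ⟨m - c, c, p - r, q - r, hmc, by omega, by omega,
    ⟨fun k hk => ?_, by omega, by omega, fun e he heN => ?_⟩, by omega⟩
  · have := h.prefix_le k hk
    have := (c_le k).2 k (left_mem_Icc.2 hk)
    have := prefixSum_m k
    omega
  · have m_e := prefixSum_m e
    rcases c_tight e with hr_le | ⟨k, hk, hk_le⟩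
    · have := h.left_tail_le e he heN
      have := h.right_tail_le e he heN
      have := h.both_tail_le e N he heN le_rfl
      omega
    · obtain ⟨hek, hkN⟩ := mem_Icc.1 hk
      have := h.both_tail_le e k he hek hkN
      have := h.prefix_le k hkN
      omega

theorem exists_add_of_tailSum_add_prefixSum_le {R R' : ℕ} (hR : prefixSum m N ≤ R)
    (hR' : prefixSum m' N ≤ R') (h : ∀ e, 1 ≤ e → e ≤ N →
      tailSum (N + 1) d e + prefixSum (m + m') e ≤ R + R') :
    ∃ d₀ d₁, d = d₀ + d₁ ∧
      (∀ e, 1 ≤ e → e ≤ N → tailSum (N + 1) d₀ e + prefixSum m e ≤ R) ∧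
      ∀ e, 1 ≤ e → e ≤ N → tailSum (N + 1) d₁ e + prefixSum m' e ≤ R' := by
  have hm {e : ℕ} (heN : e ≤ N) : prefixSum m e ≤ R := (prefixSum_mono m heN).trans hR
  have hm' {e : ℕ} (heN : e ≤ N) : prefixSum m' e ≤ R' := (prefixSum_mono m' heN).trans hR'
  obtain ⟨d₀, d₁, rfl, h₀, h₁⟩ := exists_add_of_tailSum_le_add (s := 1) (L := N + 1) (t := d)
    (B := fun e => R - prefixSum m e) (B' := fun e => R' - prefixSum m' e)
    (fun e e' hee' => Nat.sub_le_sub_left (prefixSum_mono m hee') R)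
    (fun e e' hee' => Nat.sub_le_sub_left (prefixSum_mono m' hee') R') fun e he heN => by
      rcases heN.eq_or_lt with rfl | heN
      · simp [tailSum_self]
      · have hsum := h e he (by omega)
        rw [prefixSum_add] at hsum
        have := hm (Nat.lt_succ_iff.1 heN)
        have := hm' (Nat.lt_succ_iff.1 heN)
        omega
  exact ⟨d₀, d₁, rfl, fun e he heN => Nat.add_le_of_le_sub (hm heN) (h₀ e he (by omega)),
    fun e he heN => Nat.add_le_of_le_sub (hm' heN) (h₁ e he (by omega))⟩

theorem UnpairedIneqs.exists_add (h : UnpairedIneqs N (m + m') (u + u') (v + v') a p q d)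
    (hpq : p = 0 ∨ q = 0 ∨ prefixSum a N = prefixSum (m + m') N) :
    ∃ a₀ a₁ p₀ p₁ q₀ q₁ d₀ d₁, a = a₀ + a₁ ∧ p = p₀ + p₁ ∧ q = q₀ + q₁ ∧ d = d₀ + d₁ ∧
      UnpairedIneqs N m u v a₀ p₀ q₀ d₀ ∧ UnpairedIneqs N m' u' v' a₁ p₁ q₁ d₁ := by
  obtain ⟨a₀, a₁, rfl, ha₀, ha₁⟩ := exists_add_of_prefixSum_le_add (prefixSum_mono m)
    (prefixSum_mono m') fun k hk => (h.prefix_le k hk).trans_eq (prefixSum_add m m' k)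
  have ha₀N := ha₀ N le_rfl
  have ha₁N := ha₁ N le_rfl
  have hp := h.left_le
  have hq := h.right_le
  simp only [prefixSum_add] at hp hq hpq
  obtain ⟨p₀, p₁, hp₀, hp₁, rfl⟩ := exists_add_eq_of_le_add (c := p)
    (x := prefixSum m N - prefixSum a₀ N + u) (y := prefixSum m' N - prefixSum a₁ N + u')
    (by omega)
  obtain ⟨q₀, q₁, hq₀, hq₁, rfl⟩ := exists_add_eq_of_le_add (c := q)
    (x := prefixSum m N - prefixSum a₀ N + v) (y := prefixSum m' N - prefixSum a₁ N + v')
    (by omega)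
  -- Either one of `p₀`, `q₀` vanishes or `a₀` leaves no slack: otherwise `p₀` and `q₀` could each
  -- use up the same slack of `a₀`.
  have hslack₀ : prefixSum a₀ N + p₀ + q₀ ≤ prefixSum m N + u + v := by omega
  have hslack₁ : prefixSum a₁ N + p₁ + q₁ ≤ prefixSum m' N + u' + v' := by omega
  obtain ⟨d₀, d₁, rfl, hd₀, hd₁⟩ := exists_add_of_tailSum_add_prefixSum_le (N := N) (d := d)
    (m := m) (R := 2 * prefixSum m N + u + v - (prefixSum a₀ N + p₀ + q₀))
    (m' := m') (R' := 2 * prefixSum m' N + u' + v' - (prefixSum a₁ N + p₁ + q₁))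
    (by omega) (by omega) fun e he heN => by
      have hd := h.tail_le e he heN
      simp only [prefixSum_add] at hd ⊢
      omega
  refine ⟨a₀, a₁, p₀, p₁, q₀, q₁, d₀, d₁, rfl, rfl, rfl, rfl,
    ⟨ha₀, by omega, by omega, fun e he heN => ?_⟩, ⟨ha₁, by omega, by omega, fun e he heN => ?_⟩⟩
  · have := hd₀ e he heN
    omega
  · have := hd₁ e he heN
    omega

theorem PathIneqs.exists_add (h : PathIneqs N (m + m') (u + u') (v + v') a p q d) :
    ∃ a₀ a₁ p₀ p₁ q₀ q₁ d₀ d₁, a = a₀ + a₁ ∧ p = p₀ + p₁ ∧ q = q₀ + q₁ ∧ d = d₀ + d₁ ∧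
      PathIneqs N m u v a₀ p₀ q₀ d₀ ∧ PathIneqs N m' u' v' a₁ p₁ q₁ d₁ := by
  obtain ⟨w, c, p, q, hwc, rfl, rfl, hw, hpq⟩ := h.exists_unpairedIneqs
  obtain ⟨w₀, w₁, c₀, c₁, rfl, rfl, rfl, rfl⟩ := exists_add_add_of_add_eq_add hwc
  obtain ⟨a₀, a₁, p₀, p₁, q₀, q₁, d₀, d₁, rfl, rfl, rfl, rfl, h₀, h₁⟩ := hw.exists_add hpq
  refine ⟨a₀, a₁, _, _, _, _, d₀, d₁, rfl, ?_, ?_, rfl,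
    h₀.pathIneqs_add (c := c₀), h₁.pathIneqs_add (c := c₁)⟩
  all_goals rw [prefixSum_add, add_add_add_comm]

end PathIneqs

theorem QD_add_prefixSum {N e : ℕ} (m : ℕ → ℕ) (he : e ≤ N) :
    QD (N + 2) m (e + 1) + prefixSum m e = 2 * prefixSum m N + m (N + 1) + m (N + 2) := by
  have hQ : QD (N + 2) m (e + 1) =
      prefixSum m e + 2 * tailSum N m e + m (N + 1) + m (N + 2) := rfl
  have := prefixSum_add_tailSum m he
  omega

section SD

variable {N b : ℕ} {m m' a d : ℕ → ℕ}

theorem pathIneqs_of_mem_SD (h : (a, b, d) ∈ SD (N + 2) m) :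
    PathIneqs N m (m (N + 1)) (m (N + 2)) a (a (N + 1)) b d := by
  obtain ⟨-, -, h₁, h₂, h₃, h₄, h₅, h₆, h₇⟩ := h
  have hQ {e : ℕ} (he : e ≤ N) := QD_add_prefixSum m he
  have hdN : d (N + 1) = tailSum (N + 1) d N := by simp [tailSum]
  have ha := prefixSum_succ a N
  have hm := prefixSum_succ m N
  have hm_top : prefixSum m (N + 2) = prefixSum m (N + 1) + m (N + 2) := prefixSum_succ m (N + 1)
  change prefixSum a N + b ≤ prefixSum m N + m (N + 2) at h₂
  change prefixSum a (N + 1) + d (N + 1) ≤ prefixSum m (N + 2) at h₃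
  change prefixSum a N + b + d (N + 1) ≤ prefixSum m (N + 2) at h₄
  refine ⟨fun k hk => ?_, ?_, h₂, fun e he heN => ?_, fun e he heN => ?_,
    fun e k he hek hkN => ?_⟩
  · rcases k.eq_zero_or_pos with rfl | hk₀
    · simp only [prefixSum_zero, le_refl]
    · exact h₁ k hk₀ (by omega)
  · have : prefixSum a (N + 1) ≤ prefixSum m (N + 1) := h₁ (N + 1) (by omega) le_rfl
    omega
  · rcases heN.eq_or_lt with rfl | heN
    · omega
    · have : prefixSum a (N + 1) + tailSum (N + 1) d e ≤ QD (N + 2) m (e + 1) :=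
        h₅ (e + 1) (by omega) heN
      have := hQ heN.le
      omega
  · rcases heN.eq_or_lt with rfl | heN
    · omega
    · have : prefixSum a N + b + tailSum (N + 1) d e ≤ QD (N + 2) m (e + 1) :=
        h₆ (e + 1) (by omega) heN
      have := hQ heN.le
      omega
  · have : 2 * prefixSum a k + tailSum (N + 1) a k + b + tailSum (N + 1) d e ≤
        QD (N + 2) m (e + 1) + prefixSum m k := h₇ (e + 1) k (by omega) (by omega) hek hkN
    have := hQ (hek.trans hkN)
    have := prefixSum_add_tailSum a (show k ≤ N + 1 by omega)
    omega

theorem mem_SD_of_pathIneqs (hN : 1 ≤ N) (ha₀ : ∀ l, (l = 0 ∨ N + 1 < l) → a l = 0)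
    (hd₀ : ∀ l, (l ≤ 1 ∨ N + 1 < l) → d l = 0)
    (h : PathIneqs N m (m (N + 1)) (m (N + 2)) a (a (N + 1)) b d) :
    (a, b, d) ∈ SD (N + 2) m := by
  have hQ {e : ℕ} (he : e ≤ N) := QD_add_prefixSum m he
  have hdN : d (N + 1) = tailSum (N + 1) d N := by simp [tailSum]
  have ha := prefixSum_succ a N
  have hm := prefixSum_succ m N
  have hm_top : prefixSum m (N + 2) = prefixSum m (N + 1) + m (N + 2) := prefixSum_succ m (N + 1)
  refine ⟨ha₀, hd₀, fun k _ hk => ?_, h.right_le, ?_, ?_, fun e he heN => ?_, fun e he heN => ?_,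
    fun e k he heN hek hkN => ?_⟩
  · change prefixSum a k ≤ prefixSum m k
    rcases hk.eq_or_lt with rfl | hk
    · change prefixSum a (N + 1) ≤ prefixSum m (N + 1)
      have := h.left_le
      omega
    · exact h.prefix_le k (Nat.lt_succ_iff.1 hk)
  · change prefixSum a (N + 1) + d (N + 1) ≤ prefixSum m (N + 2)
    have := h.left_tail_le N hN le_rfl
    omega
  · change prefixSum a N + b + d (N + 1) ≤ prefixSum m (N + 2)
    have := h.right_tail_le N hN le_rfl
    omega
  all_goals
    obtain ⟨e, rfl⟩ := Nat.exists_eq_add_of_le' (show 1 ≤ e by omega)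
    have := hQ (e := e) (by omega)
  · change prefixSum a (N + 1) + tailSum (N + 1) d e ≤ QD (N + 2) m (e + 1)
    have := h.left_tail_le e (by omega) (by omega)
    omega
  · change prefixSum a N + b + tailSum (N + 1) d e ≤ QD (N + 2) m (e + 1)
    have := h.right_tail_le e (by omega) (by omega)
    omega
  · change 2 * prefixSum a k + tailSum (N + 1) a k + b + tailSum (N + 1) d e ≤
      QD (N + 2) m (e + 1) + prefixSum m k
    have := h.both_tail_le e k (by omega) hek hkN
    have := prefixSum_add_tailSum a (show k ≤ N + 1 by omega)
    omega

theorem add_mem_SD (hN : 1 ≤ N) {x y : (ℕ → ℕ) × ℕ × (ℕ → ℕ)} (hx : x ∈ SD (N + 2) m)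
    (hy : y ∈ SD (N + 2) m') : x + y ∈ SD (N + 2) (m + m') := by
  refine mem_SD_of_pathIneqs hN (fun l hl => ?_) (fun l hl => ?_)
    ((pathIneqs_of_mem_SD hx).add (pathIneqs_of_mem_SD hy))
  · exact congrArg₂ (· + ·) (hx.1 l hl) (hy.1 l hl)
  · exact congrArg₂ (· + ·) (hx.2.1 l hl) (hy.2.1 l hl)

theorem exists_add_eq_of_mem_SD_add (hN : 1 ≤ N) {x : (ℕ → ℕ) × ℕ × (ℕ → ℕ)}
    (hx : x ∈ SD (N + 2) (m + m')) : ∃ y ∈ SD (N + 2) m, ∃ z ∈ SD (N + 2) m', y + z = x := by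
  obtain ⟨a, b, d⟩ := x
  obtain ⟨ha, hd, -⟩ := id hx
  obtain ⟨a₀, a₁, p₀, p₁, b₀, b₁, d₀, d₁, rfl, hp, rfl, rfl, h₀, h₁⟩ :=
    (pathIneqs_of_mem_SD hx).exists_add
  have mem_SD {w a' p b' d'} (ha' : a' ≤ a₀ + a₁) (hd' : d' ≤ d₀ + d₁)
      (h : PathIneqs N w (w (N + 1)) (w (N + 2)) a' p b' d') :
      (Function.update a' (N + 1) p, b', d') ∈ SD (N + 2) w := by
    refine mem_SD_of_pathIneqs hN (fun l hl => ?_)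
      (fun l hl => Nat.le_zero.1 ((hd' l).trans_eq (hd l hl))) ?_
    · rw [Function.update_of_ne (by omega)]
      exact Nat.le_zero.1 ((ha' l).trans_eq (ha l hl))
    · rw [Function.update_self]
      exact h.congr_prefixSum fun k hk => prefixSum_update_of_lt _ _ (Nat.lt_succ_iff.2 hk)
  refine ⟨_, mem_SD le_self_add le_self_add h₀, _, mem_SD le_add_self le_add_self h₁,
    Prod.ext ?_ rfl⟩
  change Function.update a₀ (N + 1) p₀ + Function.update a₁ (N + 1) p₁ = a₀ + a₁
  rw [← Function.update_add, ← hp, Function.update_eq_self]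

end SD

/-- Minkowski sum property `S_D(m + m') = S_D(m) + S_D(m')` (type `D` case of the paper's
Lemma `S_w(λ) + S_w(μ) = S_w(λ + μ)`). -/
theorem SD_add_eq_minkowski (n : ℕ) (hn : 4 ≤ n) (m m' : ℕ → ℕ) :
    SD n (m + m') = SD n m + SD n m' := by
  obtain ⟨N, rfl⟩ := Nat.exists_eq_add_of_le' (show 2 ≤ n by omega)
  have hN : 1 ≤ N := by omega
  ext x
  rw [Set.mem_add]
  refine ⟨exists_add_eq_of_mem_SD_add hN, ?_⟩
  rintro ⟨y, hy, z, hz, rfl⟩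
  exact add_mem_SD hN hy hz
end

section
/- For every m ∈ ℕ^n and every integer k ≥ 1, S_B(k·m) equals the k-fold Minkowski sum of S_B(m) with itself: every element of S_B(k·m) can be written as x_1 + ⋯ + x_k with all x_t ∈ S_B(m), and conversely every such sum lies in S_B(k·m). (This expresses the normality of the polytope P_w(λ), part (1) of the paper's Main Theorem, in type B.) -/
open Finset
open scoped Pointwise

/-- The quantity `q_j(m) = 2 m_1 + (m_2 + ⋯ + m_{j-1}) + 2(m_j + ⋯ + m_{n-1}) + m_n`
appearing in the type-`B` inequalities. -/
def qB (n : ℕ) (m : ℕ → ℕ) (j : ℕ) : ℕ :=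
  2 * m 1 + (∑ l ∈ Icc 2 (j - 1), m l) + 2 * (∑ l ∈ Icc j (n - 1), m l) + m n

/-- The lattice-point set `S_B(m)` of the polytope `P_w(λ)` in type `B_n`, where
`w = s_1 ⋯ s_{n-1} s_n s_{n-1} ⋯ s_1` and `λ = m_1 ω_1 + ⋯ + m_n ω_n`.
A point is a 1-based tuple `c_1, …, c_{2n-1}` of nonnegative integers (all other
coordinates vanish), subject to the Dyck-path inequalities (B1), the degree-path
inequalities (B2) and the inequalities (B3)–(B4) from paths with coefficients. -/
def SB (n : ℕ) (m : ℕ → ℕ) : Set (ℕ → ℕ) :=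
  {c | (∀ l, (l = 0 ∨ 2 * n - 1 < l) → c l = 0) ∧
    (∀ j, 1 ≤ j → j < n →
      ∑ l ∈ Icc 1 j, c l ≤ ∑ l ∈ Icc 1 j, m l) ∧
    (∀ j, 2 ≤ j → j ≤ n →
      ∑ l ∈ Icc 1 (2 * n + 1 - j), c l ≤ qB n m j) ∧
    (∀ j k, 2 ≤ j → j ≤ n → j - 1 ≤ k → k < n →
      2 * (∑ l ∈ Icc 1 k, c l) + ∑ l ∈ Icc (k + 1) (2 * n + 1 - j), c l ≤
        qB n m j + ∑ l ∈ Icc 2 k, m l) ∧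
    (∀ j, 2 ≤ j → j ≤ n →
      2 * (∑ l ∈ Icc 1 (n - 1), c l) + c n + 2 * (∑ l ∈ Icc (n + 1) (2 * n + 1 - j), c l) ≤
        qB n m j + (∑ l ∈ Icc 2 n, m l) + ∑ l ∈ Icc j (n - 1), m l)}

/-!
Let `C l = c_1 + ⋯ + c_l`, and let `M` be the partial sums of the weight. Then (B1)–(B3) bound
differences of two of the numbers `0`, `-C k` (`k < n`) and `C l` (`l > n`) by integer combinations
of the values of `M`. For the weight `(a + b) m` these bounds are multiples of `N = a + b`, so the
inequalities survive a monotone rounding of `v ↦ (a / N) v` that turns shifts by `N w` into shifts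
by `a w`. Rounding `v` to `f v = ⌊a v / N⌋` and to the complement `v - f v` thus splits a point for
`(a + b) m` into points for `a m` and `b m`.

With `K_j = barBound n M j`, (B4) reads `2 C (2n+1-j) ≤ C n - C (n-1) + 2 K_j`. For the least
`t ≥ 0` with `C (2n+1-j) ≤ t + K_j` for all `j`, it becomes `C (n-1) + 2t ≤ C n`, and the rounding
of `C n` has to respect this lower bound in spite of the coefficient `2`. This is possible because
every upper bound on `C (2n+1-j)` is at least the threshold `t + M n`, and `t + M n ≥ C (n-1) + 2t`.
Below the threshold only monotonicity matters, so there `f` may be replaced by any monotone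
function, with monotone complement, that takes the prescribed value at `C (n-1) + 2t`.
-/

section MonotoneExtension

variable {α : Type*} [AddCommGroup α] [LinearOrder α] [IsOrderedAddMonoid α]

lemma exists_monotone_eqOn_Ici {f : α → α} (hf : Monotone f) (hf' : Monotone (id - f))
    {s t a : α} (hst : s ≤ t) (ha : a ≤ f t) (ha' : s - a ≤ t - f t) :
    ∃ F : α → α, Monotone F ∧ Monotone (id - F) ∧ F s = a ∧ Set.EqOn F f (Set.Ici t) := by
  refine ⟨fun x => min (f (max x t)) (a + (x - s)), fun x y hxy => ?_, fun x y hxy => ?_, ?_,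
    fun x hx => ?_⟩
  · have := hf (max_le_max_right t hxy)
    simp only
    grind
  · have := hf' (max_le_max_right t hxy)
    simp only [Pi.sub_apply, id] at this ⊢
    grind
  · simp [hst, ha]
  · have hx' : t - f t ≤ x - f x := hf' hx
    have : f x ≤ a + (x - s) := by grind
    simpa [Set.mem_Ici.1 hx] using this

end MonotoneExtension

/-- A monotone integer-valued approximation `h` of the scaling `v ↦ (W / N) v` that is exact on
multiples of `N`, in the strong sense that it turns shifts by `N w` into shifts by `W w`. -/
structure IsRounding (N W : ℤ) (h : ℤ → ℤ) : Prop where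
  monotone : Monotone h
  map_zero : h 0 = 0
  map_add_mul : ∀ v w, h (v + N * w) = h v + W * w

namespace IsRounding

variable {N W : ℤ} {h : ℤ → ℤ}

lemma map_le (hh : IsRounding N W h) {v w x : ℤ} (hv : v ≤ w + N * x) : h v ≤ h w + W * x :=
  hh.map_add_mul w x ▸ hh.monotone hv

lemma id_sub (hh : IsRounding N W h) (hmono : Monotone (id - h)) :
    IsRounding N (N - W) (id - h) where
  monotone := hmono
  map_zero := by simp [hh.map_zero]
  map_add_mul v w := by
    simp only [Pi.sub_apply, id, hh.map_add_mul]
    ring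

lemma two_mul_sub_le (hh : IsRounding N W h) {t c x : ℤ} (hct : c + 2 * t ≤ t + N * x) :
    2 * h t - h (-c) ≤ h (t + N * x) := by
  have : h t ≤ h (-c) + W * x := hh.map_le (by linarith)
  rw [hh.map_add_mul]
  linarith

end IsRounding

lemma isRounding_mul_ediv {N W : ℤ} (hN : 0 < N) (hW : 0 ≤ W) :
    IsRounding N W fun v => W * v / N where
  monotone _ _ hvw := Int.ediv_le_ediv hN (mul_le_mul_of_nonneg_left hvw hW)
  map_zero := by simp
  map_add_mul v w := by
    rw [← Int.add_mul_ediv_left _ _ hN.ne']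
    ring_nf

lemma monotone_id_sub_mul_ediv {N W : ℤ} (hN : 0 < N) (hWN : W ≤ N) :
    Monotone (id - fun v : ℤ => W * v / N) := fun v w hvw => by
  have hdiff : W * w ≤ W * v + N * (w - v) := by nlinarith
  have := Int.ediv_le_ediv hN hdiff
  rw [Int.add_mul_ediv_left _ _ hN.ne'] at this
  simp only [Pi.sub_apply, id]
  linarith

section PartialSum

/-- The partial sums `c_1 + ⋯ + c_l` of a 1-based sequence, as integers so that they can be
subtracted. -/
def partialSum (c : ℕ → ℕ) (l : ℕ) : ℤ := ∑ i ∈ Icc 1 l, (c i : ℤ)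

/-- The sequence with given partial sums `C`; this inverts `partialSum` when `C` is monotone and
`C 0 = 0`. The value at `0` is `0` because `0 - 1 = 0`. -/
def increments (C : ℕ → ℤ) (l : ℕ) : ℕ := (C l - C (l - 1)).toNat

variable {c d : ℕ → ℕ}

@[simp] lemma partialSum_zero (c : ℕ → ℕ) : partialSum c 0 = 0 := by simp [partialSum]

lemma partialSum_one (c : ℕ → ℕ) : partialSum c 1 = c 1 := by simp [partialSum]

lemma partialSum_succ (c : ℕ → ℕ) (l : ℕ) : partialSum c (l + 1) = partialSum c l + c (l + 1) :=
  sum_Icc_succ_top (by omega) _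

lemma partialSum_monotone (c : ℕ → ℕ) : Monotone (partialSum c) :=
  monotone_nat_of_le_succ fun l => by rw [partialSum_succ]; omega

lemma partialSum_smul (k : ℕ) (c : ℕ → ℕ) : partialSum (k • c) = (k : ℤ) • partialSum c := by
  ext l
  simp [partialSum, mul_sum]

lemma partialSum_add (c d : ℕ → ℕ) : partialSum (c + d) = partialSum c + partialSum d := by
  ext l
  simp [partialSum, sum_add_distrib]

lemma sum_Icc_eq_partialSum_sub (c : ℕ → ℕ) {a b : ℕ} (ha : 1 ≤ a) (hab : a ≤ b + 1) :
    ∑ l ∈ Icc a b, (c l : ℤ) = partialSum c b - partialSum c (a - 1) := by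
  obtain ⟨a, rfl⟩ := Nat.exists_eq_add_of_le' ha
  induction b, Nat.le_of_succ_le_succ hab using Nat.le_induction with
  | base => simp
  | succ b hb ih =>
    rw [sum_Icc_succ_top (by omega), ih (by omega), partialSum_succ]
    ring

lemma eq_of_partialSum_eq (h0 : c 0 = d 0) (h : partialSum c = partialSum d) :
    c = d := by
  ext (_ | l)
  · exact h0
  · have := congrFun h l
    have := congrFun h (l + 1)
    simp only [partialSum_succ] at this
    omega

@[simp] lemma increments_zero (C : ℕ → ℤ) : increments C 0 = 0 := by simp [increments]

lemma partialSum_increments {C : ℕ → ℤ} (h0 : C 0 = 0) (hC : Monotone C) :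
    partialSum (increments C) = C := by
  ext l
  induction l with
  | zero => rw [partialSum_zero, h0]
  | succ l ih =>
    have : C l ≤ C (l + 1) := hC l.le_succ
    rw [partialSum_succ, ih, increments, Nat.add_sub_cancel]
    omega

end PartialSum

/-- The sum `(m_1 + ⋯ + m_n) + (m_j + ⋯ + m_{n-1}) = q_j(m) - m_1`, in terms of the partial sums `M`
of `m`. -/
def barBound (n : ℕ) (M : ℕ → ℤ) (j : ℕ) : ℤ := M n + (M (n - 1) - M (j - 1))

/-- The function `C` is the sequence of partial sums of nonnegative integers satisfying the
inequalities (B1)–(B4) (`dyck`, `degree`, `coeff` and `coeffBar`) for a weight with partial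
sums `M`. -/
structure IsPathBounded (n : ℕ) (M C : ℕ → ℤ) : Prop where
  map_zero : C 0 = 0
  monotone : Monotone C
  dyck : ∀ j, 1 ≤ j → j < n → C j ≤ M j
  degree : ∀ j, 2 ≤ j → j ≤ n → C (2 * n + 1 - j) ≤ M 1 + barBound n M j
  coeff : ∀ j k, 2 ≤ j → j ≤ n → j - 1 ≤ k → k < n →
    C k + C (2 * n + 1 - j) ≤ M k + barBound n M j
  coeffBar : ∀ j, 2 ≤ j → j ≤ n →
    C (n - 1) - C n + 2 * C (2 * n + 1 - j) ≤ 2 * barBound n M j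

lemma barBound_add (n : ℕ) (M M' : ℕ → ℤ) (j : ℕ) :
    barBound n (M + M') j = barBound n M j + barBound n M' j := by
  simp only [barBound, Pi.add_apply]
  ring

lemma barBound_smul (n : ℕ) (N : ℤ) (M : ℕ → ℤ) (j : ℕ) :
    barBound n (N • M) j = N * barBound n M j := by
  simp only [barBound, Pi.smul_apply, smul_eq_mul]
  ring

lemma barBound_self (n : ℕ) (M : ℕ → ℤ) : barBound n M n = M n := by simp [barBound]

lemma le_barBound {n j : ℕ} {M : ℕ → ℤ} (hM : Monotone M) (hj : j ≤ n) : M n ≤ barBound n M j :=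
  le_add_of_nonneg_right (sub_nonneg.2 (hM (by omega)))

lemma qB_eq {n j : ℕ} (m : ℕ → ℕ) (hj : 2 ≤ j) (hjn : j ≤ n) :
    (qB n m j : ℤ) = partialSum m 1 + barBound n (partialSum m) j := by
  have hlast := partialSum_succ m (n - 1)
  rw [Nat.sub_add_cancel (by omega)] at hlast
  have hlow := sum_Icc_eq_partialSum_sub m (a := 2) (b := j - 1) (by omega) (by omega)
  have hhigh := sum_Icc_eq_partialSum_sub m (a := j) (b := n - 1) (by omega) (by omega)
  have hone := partialSum_one m
  push_cast [qB, barBound, hlow, hhigh]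
  linarith

section MemSB

variable {n j k : ℕ} {m c : ℕ → ℕ}

lemma SB_dyck_iff :
    ∑ l ∈ Icc 1 j, c l ≤ ∑ l ∈ Icc 1 j, m l ↔ partialSum c j ≤ partialSum m j := by
  simp only [partialSum]
  norm_cast

lemma SB_degree_iff (hj : 2 ≤ j) (hjn : j ≤ n) :
    ∑ l ∈ Icc 1 (2 * n + 1 - j), c l ≤ qB n m j ↔
      partialSum c (2 * n + 1 - j) ≤ partialSum m 1 + barBound n (partialSum m) j := by
  rw [← qB_eq m hj hjn, partialSum]
  norm_cast

lemma SB_coeff_iff (hj : 2 ≤ j) (hjn : j ≤ n) (hjk : j - 1 ≤ k) (hkn : k < n) :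
    2 * (∑ l ∈ Icc 1 k, c l) + ∑ l ∈ Icc (k + 1) (2 * n + 1 - j), c l ≤
        qB n m j + ∑ l ∈ Icc 2 k, m l ↔
      partialSum c k + partialSum c (2 * n + 1 - j) ≤
        partialSum m k + barBound n (partialSum m) j := by
  zify
  rw [qB_eq m hj hjn, sum_Icc_eq_partialSum_sub c le_rfl (by omega),
    sum_Icc_eq_partialSum_sub c (by omega) (by omega),
    sum_Icc_eq_partialSum_sub m (by omega) (by omega)]
  simp only [Nat.sub_self, partialSum_zero, Nat.add_sub_cancel, Nat.reduceSub]
  constructor <;> intro h <;> linarith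

lemma SB_coeffBar_iff (hj : 2 ≤ j) (hjn : j ≤ n) :
    2 * (∑ l ∈ Icc 1 (n - 1), c l) + c n + 2 * (∑ l ∈ Icc (n + 1) (2 * n + 1 - j), c l) ≤
        qB n m j + (∑ l ∈ Icc 2 n, m l) + ∑ l ∈ Icc j (n - 1), m l ↔
      partialSum c (n - 1) - partialSum c n + 2 * partialSum c (2 * n + 1 - j) ≤
        2 * barBound n (partialSum m) j := by
  have hlast := partialSum_succ c (n - 1)
  rw [Nat.sub_add_cancel (by omega)] at hlast
  zify
  rw [qB_eq m hj hjn, sum_Icc_eq_partialSum_sub c le_rfl (by omega),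
    sum_Icc_eq_partialSum_sub c (by omega) (by omega),
    sum_Icc_eq_partialSum_sub m (by omega) (by omega),
    sum_Icc_eq_partialSum_sub m (by omega) (by omega)]
  simp only [Nat.sub_self, partialSum_zero, Nat.add_sub_cancel, Nat.reduceSub, barBound]
  constructor <;> intro h <;> linarith

lemma mem_SB_iff :
    c ∈ SB n m ↔ (∀ l, (l = 0 ∨ 2 * n - 1 < l) → c l = 0) ∧
      IsPathBounded n (partialSum m) (partialSum c) := by
  constructor
  · rintro ⟨hsupp, hdyck, hdegree, hcoeff, hcoeffBar⟩
    exact ⟨hsupp, partialSum_zero c, partialSum_monotone c,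
      fun j h1 hjn => SB_dyck_iff.1 (hdyck j h1 hjn),
      fun j h2 hjn => (SB_degree_iff h2 hjn).1 (hdegree j h2 hjn),
      fun j k h2 hjn hjk hkn => (SB_coeff_iff h2 hjn hjk hkn).1 (hcoeff j k h2 hjn hjk hkn),
      fun j h2 hjn => (SB_coeffBar_iff h2 hjn).1 (hcoeffBar j h2 hjn)⟩
  · rintro ⟨hsupp, h⟩
    exact ⟨hsupp,
      fun j h1 hjn => SB_dyck_iff.2 (h.dyck j h1 hjn),
      fun j h2 hjn => (SB_degree_iff h2 hjn).2 (h.degree j h2 hjn),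
      fun j k h2 hjn hjk hkn => (SB_coeff_iff h2 hjn hjk hkn).2 (h.coeff j k h2 hjn hjk hkn),
      fun j h2 hjn => (SB_coeffBar_iff h2 hjn).2 (h.coeffBar j h2 hjn)⟩

end MemSB

/-- The least `t ≥ 0` such that `C (2n+1-j) ≤ t + barBound n M j` for all `2 ≤ j ≤ n`. It turns the
inequalities (B4) into the single lower bound `C (n-1) + 2t ≤ C n`. -/
def excess (n : ℕ) (M C : ℕ → ℤ) : ℤ :=
  (insert 0 ((Icc 2 n).image fun j => C (2 * n + 1 - j) - barBound n M j)).max'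
    (insert_nonempty _ _)

section Excess

variable {n : ℕ} {M C : ℕ → ℤ}

lemma excess_nonneg : 0 ≤ excess n M C := le_max' _ _ (mem_insert_self _ _)

lemma le_excess_add_barBound {j : ℕ} (hj : 2 ≤ j) (hjn : j ≤ n) :
    C (2 * n + 1 - j) ≤ excess n M C + barBound n M j :=
  sub_le_iff_le_add.1 <| le_max' _ _ <| mem_insert_of_mem <|
    mem_image_of_mem (fun j => C (2 * n + 1 - j) - barBound n M j) (mem_Icc.2 ⟨hj, hjn⟩)

lemma excess_eq_zero_or_exists_eq :
    excess n M C = 0 ∨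
      ∃ j, 2 ≤ j ∧ j ≤ n ∧ C (2 * n + 1 - j) = excess n M C + barBound n M j := by
  refine (mem_insert.1 (max'_mem _ (insert_nonempty _ _))).imp id fun h => ?_
  obtain ⟨j, hj, heq⟩ := mem_image.1 h
  exact ⟨j, (mem_Icc.1 hj).1, (mem_Icc.1 hj).2, sub_eq_iff_eq_add.1 heq⟩

end Excess

namespace IsPathBounded

variable {n : ℕ} {M M' C C' : ℕ → ℤ}

lemma add (h : IsPathBounded n M C) (h' : IsPathBounded n M' C') :
    IsPathBounded n (M + M') (C + C') where
  map_zero := by simp [h.map_zero, h'.map_zero]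
  monotone := h.monotone.add h'.monotone
  dyck j h1 hjn := add_le_add (h.dyck j h1 hjn) (h'.dyck j h1 hjn)
  degree j h2 hjn := by
    simp only [Pi.add_apply, barBound_add]
    linarith [h.degree j h2 hjn, h'.degree j h2 hjn]
  coeff j k h2 hjn hjk hkn := by
    simp only [Pi.add_apply, barBound_add]
    linarith [h.coeff j k h2 hjn hjk hkn, h'.coeff j k h2 hjn hjk hkn]
  coeffBar j h2 hjn := by
    simp only [Pi.add_apply, barBound_add]
    linarith [h.coeffBar j h2 hjn, h'.coeffBar j h2 hjn]

lemma add_two_mul_excess_le (h : IsPathBounded n M C) : C (n - 1) + 2 * excess n M C ≤ C n := by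
  rcases excess_eq_zero_or_exists_eq (n := n) (M := M) (C := C) with h0 | ⟨j, h2, hjn, htight⟩
  · linarith [h.monotone (Nat.sub_le n 1)]
  · linarith [h.coeffBar j h2 hjn]

lemma excess_add_le_degree (h : IsPathBounded n M C) (hM : Monotone M) (hM1 : 0 ≤ M 1) {j : ℕ}
    (hjn : j ≤ n) : excess n M C + M n ≤ M 1 + barBound n M j := by
  refine add_le_add ?_ (le_barBound hM hjn)
  rcases excess_eq_zero_or_exists_eq (n := n) (M := M) (C := C) with h0 | ⟨i, h2, hin, htight⟩
  · rwa [h0]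
  · linarith [h.degree i h2 hin]

lemma excess_add_le_coeff (h : IsPathBounded n M C) (hM : Monotone M) {j k : ℕ} (hj : 2 ≤ j)
    (hjn : j ≤ n) (hjk : j - 1 ≤ k) (hkn : k < n) :
    C k + (excess n M C + M n) ≤ M k + barBound n M j := by
  have hbar := le_barBound hM hjn
  rcases excess_eq_zero_or_exists_eq (n := n) (M := M) (C := C) with h0 | ⟨i, h2, hin, htight⟩
  · linarith [h.dyck k (by omega) hkn]
  · rcases le_or_gt (i - 1) k with hik | hki
    · linarith [h.coeff i k h2 hin hik hkn]
    · have hmono : C (2 * n + 1 - i) ≤ C (2 * n + 1 - j) := h.monotone (by omega)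
      linarith [h.coeff j k hj hjn hjk hkn, le_barBound hM hin]

lemma add_two_mul_excess_le_threshold (h : IsPathBounded n M C) (hM : Monotone M) (hn : 2 ≤ n) :
    C (n - 1) + 2 * excess n M C ≤ excess n M C + M n := by
  have := h.excess_add_le_coeff hM hn le_rfl le_rfl (Nat.sub_lt (by omega) one_pos)
  rw [barBound_self] at this
  linarith [hM (Nat.sub_le n 1)]

end IsPathBounded

/-- Partial sums rounded by `h` in the first half, where `C` enters the inequalities negatively, and
by `H` in the second half. -/
def roundHalves (n : ℕ) (h H : ℤ → ℤ) (C : ℕ → ℤ) (l : ℕ) : ℤ :=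
  if l < n then -h (-C l) else H (C l)

section RoundHalves

variable {n l : ℕ} {h H : ℤ → ℤ} {C : ℕ → ℤ}

lemma roundHalves_of_lt (hl : l < n) : roundHalves n h H C l = -h (-C l) := if_pos hl

lemma roundHalves_of_le (hl : n ≤ l) : roundHalves n h H C l = H (C l) := if_neg hl.not_gt

lemma roundHalves_add_roundHalves_id_sub :
    roundHalves n h H C + roundHalves n (id - h) (id - H) C = C := by
  ext l
  simp only [roundHalves, Pi.add_apply, Pi.sub_apply, id]
  split_ifs <;> ring

lemma roundHalves_monotone (hC : Monotone C) (hh : Monotone h) (hH : Monotone H)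
    (hjoin : -h (-C (n - 1)) ≤ H (C n)) : Monotone (roundHalves n h H C) := by
  intro a b hab
  rcases lt_or_ge b n with hb | hb
  · rw [roundHalves_of_lt (hab.trans_lt hb), roundHalves_of_lt hb]
    exact neg_le_neg (hh (neg_le_neg (hC hab)))
  rcases lt_or_ge a n with ha | ha
  · rw [roundHalves_of_lt ha, roundHalves_of_le hb]
    calc -h (-C a) ≤ -h (-C (n - 1)) := neg_le_neg (hh (neg_le_neg (hC (by omega))))
      _ ≤ H (C n) := hjoin
      _ ≤ H (C b) := hH (hC hb)
  · rw [roundHalves_of_le ha, roundHalves_of_le hb]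
    exact hH (hC hab)

end RoundHalves

section Split

variable {n : ℕ} {N W : ℤ} {M C : ℕ → ℤ} {h H : ℤ → ℤ}

lemma IsRounding.map_le_of_eqOn_Ici (hh : IsRounding N W h) (hH : Monotone H) {T : ℤ}
    (hHh : Set.EqOn H h (Set.Ici T)) {v w x : ℤ} (hv : v ≤ w + N * x) (hT : T ≤ w + N * x) :
    H v ≤ h w + W * x :=
  calc H v ≤ H (w + N * x) := hH hv
    _ = h w + W * x := by rw [hHh hT, hh.map_add_mul]

lemma IsPathBounded.roundHalves (hC : IsPathBounded n (N • M) C) (hn : 2 ≤ n) (hN : 0 ≤ N)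
    (hM : Monotone M) (hM1 : 0 ≤ M 1) (hh : IsRounding N W h) (hH : Monotone H)
    (hstart : H (C (n - 1) + 2 * excess n (N • M) C) =
      2 * h (excess n (N • M) C) - h (-C (n - 1)))
    (hHh : Set.EqOn H h (Set.Ici (excess n (N • M) C + (N • M) n))) :
    IsPathBounded n (W • M) (roundHalves n h H C) := by
  have hNM : Monotone (N • M) := fun _ _ hab => mul_le_mul_of_nonneg_left (hM hab) hN
  have hCn : 2 * h (excess n (N • M) C) - h (-C (n - 1)) ≤ H (C n) :=
    hstart ▸ hH hC.add_two_mul_excess_le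
  have hexcess : 0 ≤ h (excess n (N • M) C) := hh.map_zero ▸ hh.monotone excess_nonneg
  have hbar : ∀ j ≤ n, n ≤ 2 * n + 1 - j := fun j hj => by omega
  exact
  { map_zero := by
      simp [roundHalves_of_lt (show 0 < n by omega), hC.map_zero, hh.map_zero]
    monotone := roundHalves_monotone hC.monotone hh.monotone hH (by linarith)
    dyck := fun j h1 hjn => by
      have := hh.map_le (v := 0) (w := -C j) (x := M j) (by simpa using hC.dyck j h1 hjn)
      rw [hh.map_zero] at this
      simp only [roundHalves_of_lt hjn, Pi.smul_apply, smul_eq_mul]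
      linarith
    degree := fun j h2 hjn => by
      rw [roundHalves_of_le (hbar j hjn), barBound_smul]
      have hY := hC.degree j h2 hjn
      have hT := hC.excess_add_le_degree hNM (mul_nonneg hN hM1) hjn
      simp only [barBound_smul, Pi.smul_apply, smul_eq_mul, ← mul_add] at hY hT ⊢
      simpa [hh.map_zero] using
        hh.map_le_of_eqOn_Ici hH hHh (w := 0) (by simpa using hY) (by simpa using hT)
    coeff := fun j k h2 hjn hjk hkn => by
      rw [roundHalves_of_le (hbar j hjn), roundHalves_of_lt hkn, barBound_smul]
      have hY := hC.coeff j k h2 hjn hjk hkn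
      have hT := hC.excess_add_le_coeff hNM h2 hjn hjk hkn
      simp only [barBound_smul, Pi.smul_apply, smul_eq_mul, ← mul_add] at hY hT ⊢
      linarith [hh.map_le_of_eqOn_Ici hH hHh (le_neg_add_iff_add_le.2 hY)
        (le_neg_add_iff_add_le.2 hT)]
    coeffBar := fun j h2 hjn => by
      rw [roundHalves_of_le (hbar j hjn), roundHalves_of_le le_rfl,
        roundHalves_of_lt (by omega), barBound_smul]
      have hY := le_excess_add_barBound (M := N • M) (C := C) h2 hjn
      have hT := add_le_add_right (le_barBound hNM hjn) (excess n (N • M) C)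
      rw [barBound_smul] at hY hT
      linarith [hh.map_le_of_eqOn_Ici hH hHh hY hT] }

lemma IsPathBounded.exists_add_eq (hC : IsPathBounded n (N • M) C) (hn : 2 ≤ n) (hN : 0 < N)
    (hM : Monotone M) (hM1 : 0 ≤ M 1) (hW : 0 ≤ W) (hWN : W ≤ N) :
    ∃ A B : ℕ → ℤ, IsPathBounded n (W • M) A ∧ IsPathBounded n ((N - W) • M) B ∧ A + B = C := by
  obtain ⟨f, hf, hf'⟩ : ∃ f, IsRounding N W f ∧ Monotone (id - f) :=
    ⟨_, isRounding_mul_ediv hN hW, monotone_id_sub_mul_ediv hN hWN⟩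
  have hg := hf.id_sub hf'
  have hNM : Monotone (N • M) := fun _ _ hab => mul_le_mul_of_nonneg_left (hM hab) hN.le
  have hST := hC.add_two_mul_excess_le_threshold hNM hn
  have hgT := hg.two_mul_sub_le hST
  simp only [Pi.sub_apply, id] at hgT
  obtain ⟨F, hF, hF', hFS, hFT⟩ := exists_monotone_eqOn_Ici hf.monotone hf' hST
    (hf.two_mul_sub_le hST) (by simp only [Pi.smul_apply, smul_eq_mul]; linarith)
  refine ⟨_, _, hC.roundHalves hn hN.le hM hM1 hf hF hFS hFT,
    hC.roundHalves hn hN.le hM hM1 hg hF' ?_ fun x hx => ?_, roundHalves_add_roundHalves_id_sub⟩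
  · simp only [Pi.sub_apply, id, hFS]
    ring
  · simp only [Pi.sub_apply, hFT hx]

end Split

lemma add_mem_SB {n : ℕ} {m m' x y : ℕ → ℕ} (hx : x ∈ SB n m) (hy : y ∈ SB n m') :
    x + y ∈ SB n (m + m') := by
  rw [mem_SB_iff] at hx hy ⊢
  refine ⟨fun l hl => by simp [hx.1 l hl, hy.1 l hl], ?_⟩
  rw [partialSum_add, partialSum_add]
  exact hx.2.add hy.2

lemma exists_add_eq_of_mem_SB {n a b : ℕ} (hn : 2 ≤ n) (hab : 0 < a + b) {m z : ℕ → ℕ}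
    (hz : z ∈ SB n ((a + b) • m)) : ∃ x ∈ SB n (a • m), ∃ y ∈ SB n (b • m), x + y = z := by
  obtain ⟨hsupp, hz⟩ := mem_SB_iff.1 hz
  rw [partialSum_smul] at hz
  obtain ⟨A, B, hA, hB, hAB⟩ := hz.exists_add_eq (W := a) hn (by omega) (partialSum_monotone m)
    (by simp [partialSum_one]) (by omega) (by omega)
  have hx := partialSum_increments hA.map_zero hA.monotone
  have hy := partialSum_increments hB.map_zero hB.monotone
  have hxy : increments A + increments B = z := by
    apply eq_of_partialSum_eq
    · simp [hsupp 0 (Or.inl rfl)]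
    · rw [partialSum_add, hx, hy, hAB]
  have hsupp' : ∀ l, (l = 0 ∨ 2 * n - 1 < l) → increments A l = 0 ∧ increments B l = 0 :=
    fun l hl => by simpa [← hxy] using hsupp l hl
  refine ⟨_, mem_SB_iff.2 ⟨fun l hl => (hsupp' l hl).1, ?_⟩,
    _, mem_SB_iff.2 ⟨fun l hl => (hsupp' l hl).2, ?_⟩, hxy⟩
  · rwa [hx, partialSum_smul]
  · rw [hy, partialSum_smul]
    simpa using hB

theorem SB_add_smul {n a b : ℕ} (hn : 2 ≤ n) (hab : 0 < a + b) (m : ℕ → ℕ) :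
    SB n ((a + b) • m) = SB n (a • m) + SB n (b • m) := by
  refine Set.Subset.antisymm (fun z hz => Set.mem_add.2 (exists_add_eq_of_mem_SB hn hab hz)) ?_
  rw [add_smul]
  exact Set.add_subset_iff.2 fun x hx y hy => add_mem_SB hx hy

theorem SB_smul_eq_sum {n k : ℕ} (hn : 2 ≤ n) (hk : 1 ≤ k) (m : ℕ → ℕ) :
    SB n (k • m) = ∑ _t : Fin k, SB n m := by
  induction k, hk using Nat.le_induction with
  | base => simp
  | succ k _ ih => rw [SB_add_smul hn (by omega), ih, one_smul, Fin.sum_univ_castSucc]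

/-- Normality of the polytope in type `B`: `S_B(k·m)` is the `k`-fold Minkowski sum of
`S_B(m)` with itself. -/
theorem SB_normal (n k : ℕ) (hn : 2 ≤ n) (hk : 1 ≤ k) (m : ℕ → ℕ) (z : ℕ → ℕ) :
    z ∈ SB n (k • m) ↔
      ∃ x : Fin k → (ℕ → ℕ), (∀ t, x t ∈ SB n m) ∧ z = ∑ t, x t := by
  rw [SB_smul_eq_sum hn hk, Set.mem_fintype_sum]
  simp only [exists_prop, eq_comm]
end
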